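/- arXiv:2407.09834 — 3 statements merged into one kernel-verified Lean document; each statement's English description precedes it below -/
import Mathlib

section
/- Let d ≥ 1, A a complex d×d matrix, θ ∈ ℝ, and M, c > 0 such that for all z ∈ ℂᵈ: ‖A.mulVec z‖ ≤ M·‖z‖ (Euclidean norms) and Re(exp(I·θ)·⟨Az, z⟩) ≥ c·‖z‖². Then A is invertible, and the inverse B := A⁻¹ satisfies: (a) for all y ∈ ℂᵈ, M⁻¹·‖y‖ ≤ ‖B.mulVec y‖ ≤ c⁻¹·‖y‖; (b) for all y ∈ ℂᵈ, Re(exp(−I·θ)·⟨By, y⟩) ≥ (c/M²)·‖y‖². -/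
/-!
Everything reduces to estimates for `z = A⁻¹ y`, that is `y = A z`. Ellipticity and Cauchy-Schwarz
give `c ‖z‖² ≤ ‖A z‖ ‖z‖`, hence `c ‖z‖ ≤ ‖A z‖`; so `A` is injective, thus invertible, and the
upper bound on `‖A⁻¹ y‖` follows. The lower bound is the boundedness of `A`. For the ellipticity
of the inverse, `exp(-iθ) ⟨A⁻¹ y, y⟩ = exp(-iθ) ⟨z, A z⟩` is the complex conjugate of
`exp(iθ) ⟨A z, z⟩`, so its real part is at least `c ‖z‖² ≥ (c / M²) ‖y‖²`.
-/

open Matrix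

/-- Euclidean norm of a vector in `ℂᵈ`. -/
noncomputable def eunorm {d : ℕ} (z : Fin d → ℂ) : ℝ := Real.sqrt (∑ i, ‖z i‖ ^ 2)

lemma eunorm_nonneg {d : ℕ} (z : Fin d → ℂ) : 0 ≤ eunorm z := Real.sqrt_nonneg _

lemma eunorm_sq {d : ℕ} (z : Fin d → ℂ) : eunorm z ^ 2 = ∑ i, ‖z i‖ ^ 2 :=
  Real.sq_sqrt (Finset.sum_nonneg fun _ _ => by positivity)

lemma eq_zero_of_eunorm {d : ℕ} {z : Fin d → ℂ} (h : eunorm z = 0) : z = 0 := by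
  have h2 := eunorm_sq z
  rw [h, zero_pow two_ne_zero, eq_comm,
    Finset.sum_eq_zero_iff_of_nonneg fun _ _ => by positivity] at h2
  funext i
  simpa using h2 i (Finset.mem_univ i)

lemma norm_dotProduct_star_le {d : ℕ} (w z : Fin d → ℂ) :
    ‖w ⬝ᵥ star z‖ ≤ eunorm w * eunorm z :=
  calc ‖w ⬝ᵥ star z‖ ≤ ∑ i, ‖w i * star z i‖ := norm_sum_le _ _
    _ = ∑ i, ‖w i‖ * ‖z i‖ := by simp
    _ ≤ eunorm w * eunorm z := Real.sum_mul_le_sqrt_mul_sqrt _ _ _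

/-- An elliptic matrix is bounded below by its ellipticity constant. -/
lemma mul_eunorm_le_of_elliptic {d : ℕ} {A : Matrix (Fin d) (Fin d) ℂ} {θ c : ℝ}
    (hell : ∀ z : Fin d → ℂ,
      c * (∑ i, ‖z i‖ ^ 2) ≤ (Complex.exp (Complex.I * (θ : ℂ)) * (A.mulVec z ⬝ᵥ star z)).re)
    (z : Fin d → ℂ) : c * eunorm z ≤ eunorm (A.mulVec z) := by
  have h : c * eunorm z ^ 2 ≤ eunorm (A.mulVec z) * eunorm z := by
    rw [eunorm_sq]
    refine (hell z).trans ((Complex.re_le_norm _).trans ?_)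
    rw [norm_mul, mul_comm Complex.I, Complex.norm_exp_ofReal_mul_I, one_mul]
    exact norm_dotProduct_star_le _ _
  rcases (eunorm_nonneg z).eq_or_lt with h0 | h0
  · rw [← h0, mul_zero]
    exact eunorm_nonneg _
  · refine le_of_mul_le_mul_right ?_ h0
    linarith

/-- `exp(-iθ) ⟨z, w⟩` and `exp(iθ) ⟨w, z⟩` are complex conjugates. -/
lemma re_exp_neg_mul_dotProduct {d : ℕ} (θ : ℝ) (w z : Fin d → ℂ) :
    (Complex.exp (-(Complex.I * (θ : ℂ))) * (z ⬝ᵥ star w)).re =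
      (Complex.exp (Complex.I * (θ : ℂ)) * (w ⬝ᵥ star z)).re := by
  rw [← Complex.conj_re (Complex.exp (Complex.I * (θ : ℂ)) * (w ⬝ᵥ star z)), map_mul,
    ← Complex.exp_conj, map_mul, Complex.conj_I, Complex.conj_ofReal, neg_mul,
    starRingEnd_apply (w ⬝ᵥ star z), ← Matrix.dotProduct_star]

theorem stmt6 {d : ℕ} (hd : 1 ≤ d) (A : Matrix (Fin d) (Fin d) ℂ)
    (θ M c : ℝ) (hM : 0 < M) (hc : 0 < c)
    (hbdd : ∀ z : Fin d → ℂ, eunorm (A.mulVec z) ≤ M * eunorm z)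
    (hell : ∀ z : Fin d → ℂ,
      c * (∑ i, ‖z i‖ ^ 2) ≤ (Complex.exp (Complex.I * (θ : ℂ)) * (A.mulVec z ⬝ᵥ star z)).re) :
    IsUnit A ∧
    (∀ y : Fin d → ℂ,
      M⁻¹ * eunorm y ≤ eunorm (A⁻¹.mulVec y) ∧ eunorm (A⁻¹.mulVec y) ≤ c⁻¹ * eunorm y) ∧
    (∀ y : Fin d → ℂ,
      (c / M ^ 2) * (∑ i, ‖y i‖ ^ 2) ≤
        (Complex.exp (-(Complex.I * (θ : ℂ))) * (A⁻¹.mulVec y ⬝ᵥ star y)).re) := by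
  have hlow := mul_eunorm_le_of_elliptic hell
  have hA : IsUnit A := by
    rw [← Matrix.mulVec_injective_iff_isUnit]
    intro x y hxy
    have h := hlow (x - y)
    have hz : eunorm (0 : Fin d → ℂ) = 0 := by simp [eunorm]
    rw [Matrix.mulVec_sub, sub_eq_zero.mpr hxy, hz] at h
    refine sub_eq_zero.mp (eq_zero_of_eunorm (le_antisymm ?_ (eunorm_nonneg _)))
    exact nonpos_of_mul_nonpos_right h hc
  have hAinv : ∀ y, A.mulVec (A⁻¹.mulVec y) = y := fun y => by
    rw [Matrix.mulVec_mulVec, Matrix.mul_nonsing_inv _ ((Matrix.isUnit_iff_isUnit_det A).mp hA),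
      Matrix.one_mulVec]
  refine ⟨hA, fun y => ⟨?_, ?_⟩, fun y => ?_⟩
  · have h := hbdd (A⁻¹.mulVec y)
    rw [hAinv] at h
    rwa [inv_mul_le_iff₀ hM]
  · have h := hlow (A⁻¹.mulVec y)
    rw [hAinv] at h
    rwa [le_inv_mul_iff₀ hc]
  · have h := hell (A⁻¹.mulVec y)
    have hb := hbdd (A⁻¹.mulVec y)
    rw [hAinv] at h hb
    rw [re_exp_neg_mul_dotProduct]
    refine le_trans ?_ h
    rw [← eunorm_sq, ← eunorm_sq, div_mul_eq_mul_div, mul_div_assoc]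
    refine mul_le_mul_of_nonneg_left ?_ hc.le
    rw [div_le_iff₀ (by positivity), ← mul_pow, mul_comm]
    exact pow_le_pow_left₀ (eunorm_nonneg _) hb 2
end

section
/- Let (Ω, μ) and (Γ, σ) be measure spaces; let ε, ν be fields of complex 3×3 matrices on Ω and α a field of complex 2×2 matrices on Γ. Let ω > 0, θ ∈ ℝ, and ε₋, m, α₋ > 0 such that: for μ-a.e. x and all z ∈ ℂ³, Re(exp(I·θ)·⟨ε(x)z, z⟩) ≥ ε₋·‖z‖² and Re(−exp(I·θ)·⟨ν(x)z, z⟩) ≥ m·‖z‖²; and for σ-a.e. y and all z ∈ ℂ², Re(exp(I·θ)·⟨α(y)z, z⟩) ≥ α₋·‖z‖². Let u, w : Ω → ℂ³ and g : Γ → ℂ² be measurable with ∫‖u‖² dμ, ∫‖w‖² dμ, ∫‖g‖² dσ all finite, and assume the functions x ↦ ⟨ν(x)w(x), w(x)⟩, x ↦ ⟨ε(x)u(x), u(x)⟩ and y ↦ ⟨α(y)g(y), g(y)⟩ are integrable. Then Re(−exp(I·θ)·(∫⟨ν w, w⟩ dμ − ω²·∫⟨ε u, u⟩ dμ − ∫⟨α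 g, g⟩ dσ)) ≥ min(m, ω²·ε₋, α₋)·(∫‖w‖² dμ + ∫‖u‖² dμ + ∫‖g‖² dσ). -/
open MeasureTheory Matrix

/-! Write `N`, `E`, `A` for the integrals of `⟨ν w, w⟩`, `⟨ε u, u⟩`, `⟨α g, g⟩`.
Since `-e^{iθ} (N - ω² E - A) = (-e^{iθ} N) + ω² (e^{iθ} E) + e^{iθ} A`, the common ellipticity
direction `θ` makes each of the three real parts nonnegative. Each one is bounded below by
integrating the pointwise ellipticity estimate (`le_re_mul_integral`), and each of the resulting
constants `m`, `ω² εm`, `αm` is at least their minimum.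
-/

/-- A pointwise a.e. lower bound `k f ≤ Re (c F)` passes to the integrals. -/
theorem le_re_mul_integral {X : Type*} [MeasurableSpace X] {μ : Measure X} {f : X → ℝ}
    {F : X → ℂ} {k : ℝ} {c : ℂ} (hf : Integrable f μ) (hF : Integrable F μ)
    (h : ∀ᵐ x ∂μ, k * f x ≤ (c * F x).re) :
    k * ∫ x, f x ∂μ ≤ (c * ∫ x, F x ∂μ).re := by
  rw [← integral_const_mul, ← integral_const_mul]
  have hre : ∫ x, (c * F x).re ∂μ = (∫ x, c * F x ∂μ).re := integral_re (hF.const_mul c)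
  rw [← hre]
  exact integral_mono_ae (hf.const_mul k) (hF.const_mul c).re h

theorem stmt11 {Ω : Type*} [MeasurableSpace Ω] (μ : Measure Ω)
    {Γ : Type*} [MeasurableSpace Γ] (σ : Measure Γ)
    (ε ν : Ω → Matrix (Fin 3) (Fin 3) ℂ) (α : Γ → Matrix (Fin 2) (Fin 2) ℂ)
    (ω θ εm m αm : ℝ) (hω : 0 < ω) (hεm : 0 < εm) (hm : 0 < m) (hαm : 0 < αm)
    (hε : ∀ᵐ x ∂μ, ∀ z : Fin 3 → ℂ,
      εm * (∑ i, ‖z i‖ ^ 2) ≤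
        (Complex.exp (Complex.I * (θ : ℂ)) * ((ε x).mulVec z ⬝ᵥ star z)).re)
    (hν : ∀ᵐ x ∂μ, ∀ z : Fin 3 → ℂ,
      m * (∑ i, ‖z i‖ ^ 2) ≤
        (-(Complex.exp (Complex.I * (θ : ℂ))) * ((ν x).mulVec z ⬝ᵥ star z)).re)
    (hα : ∀ᵐ y ∂σ, ∀ z : Fin 2 → ℂ,
      αm * (∑ i, ‖z i‖ ^ 2) ≤
        (Complex.exp (Complex.I * (θ : ℂ)) * ((α y).mulVec z ⬝ᵥ star z)).re)
    (u w : Ω → Fin 3 → ℂ) (g : Γ → Fin 2 → ℂ)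
    (hu : Measurable u) (hw : Measurable w) (hg : Measurable g)
    (huL2 : Integrable (fun x => ∑ i, ‖u x i‖ ^ 2) μ)
    (hwL2 : Integrable (fun x => ∑ i, ‖w x i‖ ^ 2) μ)
    (hgL2 : Integrable (fun y => ∑ i, ‖g y i‖ ^ 2) σ)
    (hνint : Integrable (fun x => (ν x).mulVec (w x) ⬝ᵥ star (w x)) μ)
    (hεint : Integrable (fun x => (ε x).mulVec (u x) ⬝ᵥ star (u x)) μ)
    (hαint : Integrable (fun y => (α y).mulVec (g y) ⬝ᵥ star (g y)) σ) :
    (-(Complex.exp (Complex.I * (θ : ℂ))) *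
        ((∫ x, (ν x).mulVec (w x) ⬝ᵥ star (w x) ∂μ) -
          ((ω : ℂ) ^ 2) * (∫ x, (ε x).mulVec (u x) ⬝ᵥ star (u x) ∂μ) -
          (∫ y, (α y).mulVec (g y) ⬝ᵥ star (g y) ∂σ))).re ≥
      min (min m (ω ^ 2 * εm)) αm *
        ((∫ x, ∑ i, ‖w x i‖ ^ 2 ∂μ) + (∫ x, ∑ i, ‖u x i‖ ^ 2 ∂μ) +
          (∫ y, ∑ i, ‖g y i‖ ^ 2 ∂σ)) := by
  have h1 := le_re_mul_integral hwL2 hνint (hν.mono fun x hx => hx (w x))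
  have h2 := le_re_mul_integral huL2 hεint (hε.mono fun x hx => hx (u x))
  have h3 := le_re_mul_integral hgL2 hαint (hα.mono fun y hy => hy (g y))
  have p1 : 0 ≤ ∫ x, ∑ i, ‖w x i‖ ^ 2 ∂μ := integral_nonneg fun x => by positivity
  have p2 : 0 ≤ ∫ x, ∑ i, ‖u x i‖ ^ 2 ∂μ := integral_nonneg fun x => by positivity
  have p3 : 0 ≤ ∫ y, ∑ i, ‖g y i‖ ^ 2 ∂σ := integral_nonneg fun y => by positivity
  generalize (∫ x, ∑ i, ‖w x i‖ ^ 2 ∂μ) = W at *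
  generalize (∫ x, ∑ i, ‖u x i‖ ^ 2 ∂μ) = U at *
  generalize (∫ y, ∑ i, ‖g y i‖ ^ 2 ∂σ) = G at *
  generalize (∫ x, (ν x).mulVec (w x) ⬝ᵥ star (w x) ∂μ) = N at *
  generalize (∫ x, (ε x).mulVec (u x) ⬝ᵥ star (u x) ∂μ) = E at *
  generalize (∫ y, (α y).mulVec (g y) ⬝ᵥ star (g y) ∂σ) = A at *
  generalize Complex.exp (Complex.I * (θ : ℂ)) = c at *
  have key : (-c * (N - (ω : ℂ) ^ 2 * E - A)).re =
      (-c * N).re + ω ^ 2 * (c * E).re + (c * A).re := by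
    have e : -c * (N - (ω : ℂ) ^ 2 * E - A) =
        -c * N + ((ω ^ 2 : ℝ) : ℂ) * (c * E) + c * A := by
      push_cast
      ring
    rw [e, Complex.add_re, Complex.add_re, Complex.re_ofReal_mul]
  rw [key]
  have q1 : min (min m (ω ^ 2 * εm)) αm * W ≤ m * W :=
    mul_le_mul_of_nonneg_right ((min_le_left _ _).trans (min_le_left _ _)) p1
  have q2 : min (min m (ω ^ 2 * εm)) αm * U ≤ ω ^ 2 * εm * U :=
    mul_le_mul_of_nonneg_right ((min_le_left _ _).trans (min_le_right _ _)) p2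
  have q3 : min (min m (ω ^ 2 * εm)) αm * G ≤ αm * G :=
    mul_le_mul_of_nonneg_right (min_le_right _ _) p3
  have h2' := mul_le_mul_of_nonneg_left h2 (sq_nonneg ω)
  linarith
end

section
/- Let (D, μ) be a measure space, d ≥ 1, and ζ a field of complex d×d matrices on D such that: (i) there exists ζ₊ > 0 with ‖ζ(x).mulVec z‖ ≤ ζ₊·‖z‖ (Euclidean norms) for all z ∈ ℂᵈ, for μ-a.e. x; (ii) there exist θ₀ ∈ ℝ and c₀ > 0 with Re(exp(I·θ₀)·⟨ζ(x)z, z⟩) ≥ c₀·‖z‖² for all z ∈ ℂᵈ, for μ-a.e. x. Then ζ(x) is invertible for μ-a.e. x, and {θ ∈ ℝ : ∃ c > 0, for μ-a.e. x, ∀ z ∈ ℂᵈ, Re(exp(I·θ)·⟨(ζ(x))⁻¹ z, z⟩) ≥ c·‖z‖²} = {−θ : θ ∈ ℝ and ∃ c > 0, for μ-a.e. x, ∀ z ∈ ℂᵈ, Re(exp(I·θ)·⟨ζ(x) z, z⟩) ≥ c·‖z‖²}. -/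
/-!
Write `w = A⁻¹ z`, so `z = A w`. Then `⟨A⁻¹ z, z⟩ = ⟨w, A w⟩` is the conjugate of `⟨A w, w⟩`, hence
`Re (e^{-iθ} ⟨A⁻¹ z, z⟩) = Re (e^{iθ} ⟨A w, w⟩) ≥ c ‖w‖² ≥ (c / K) ‖z‖²` as soon as
`‖A w‖² ≤ K ‖w‖²` (`coercive_of_mul_eq_one`). For `A = ζ x` this bound is the boundedness
hypothesis, which gives one inclusion. The converse inclusion is the same argument with `ζ x` and
`(ζ x)⁻¹` exchanged; the bound on `(ζ x)⁻¹` comes from ellipticity of `ζ` and Cauchy–Schwarz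
(`sq_mul_sum_le_of_coercive`), which also shows that `ζ x` is injective, hence invertible.
-/

open MeasureTheory Matrix

/-- Coercivity at a single vector `z` bounds `‖A z‖` from below there, since
`c ‖z‖² ≤ |⟨A z, z⟩| ≤ ‖A z‖ ‖z‖`. -/
lemma sq_mul_sum_le_of_coercive {d : ℕ} {A : Matrix (Fin d) (Fin d) ℂ} {θ c : ℝ} (hc : 0 < c)
    {z : Fin d → ℂ}
    (h : c * (∑ i, ‖z i‖ ^ 2) ≤
      (Complex.exp (Complex.I * (θ : ℂ)) * (A.mulVec z ⬝ᵥ star z)).re) :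
    c ^ 2 * (∑ i, ‖z i‖ ^ 2) ≤ ∑ i, ‖A.mulVec z i‖ ^ 2 := by
  have h1 : c * (∑ i, ‖z i‖ ^ 2) ≤ ∑ i, ‖A.mulVec z i‖ * ‖z i‖ := by
    refine h.trans ((Complex.re_le_norm _).trans ?_)
    rw [norm_mul, mul_comm Complex.I, Complex.norm_exp_ofReal_mul_I, one_mul]
    refine (norm_sum_le _ _).trans (le_of_eq ?_)
    simp
  have h2 := Finset.sum_mul_sq_le_sq_mul_sq Finset.univ (fun i => ‖A.mulVec z i‖) (fun i => ‖z i‖)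
  have hN : 0 ≤ ∑ i, ‖z i‖ ^ 2 := by positivity
  have hM : 0 ≤ ∑ i, ‖A.mulVec z i‖ ^ 2 := by positivity
  rcases hN.eq_or_lt with h0 | h0
  · rw [← h0]; simpa using hM
  · refine le_of_mul_le_mul_right ?_ h0
    have h3 := pow_le_pow_left₀ (by positivity) h1 2
    linarith [mul_pow c (∑ i, ‖z i‖ ^ 2) 2, sq (∑ i, ‖z i‖ ^ 2),
      mul_assoc (c ^ 2) (∑ i, ‖z i‖ ^ 2) (∑ i, ‖z i‖ ^ 2),
      congrArg (c ^ 2 * ·) (sq (∑ i, ‖z i‖ ^ 2))]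

/-- A right inverse of a bounded matrix that is coercive in direction `θ` is coercive in
direction `-θ`. -/
lemma coercive_of_mul_eq_one {d : ℕ} {A B : Matrix (Fin d) (Fin d) ℂ} (hAB : A * B = 1)
    {θ c K : ℝ} (hc : 0 < c) (hK : 0 < K)
    (hb : ∀ w : Fin d → ℂ, ∑ i, ‖A.mulVec w i‖ ^ 2 ≤ K * ∑ i, ‖w i‖ ^ 2)
    (h : ∀ w : Fin d → ℂ, c * (∑ i, ‖w i‖ ^ 2) ≤
      (Complex.exp (Complex.I * (θ : ℂ)) * (A.mulVec w ⬝ᵥ star w)).re) (z : Fin d → ℂ) :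
    c / K * (∑ i, ‖z i‖ ^ 2) ≤
      (Complex.exp (Complex.I * ((-θ : ℝ) : ℂ)) * (B.mulVec z ⬝ᵥ star z)).re := by
  obtain ⟨w, hw⟩ : ∃ w, B.mulVec z = w := ⟨_, rfl⟩
  have hz : z = A.mulVec w := by rw [← hw, mulVec_mulVec, hAB, one_mulVec]
  have key : Complex.exp (Complex.I * ((-θ : ℝ) : ℂ)) * (w ⬝ᵥ star (A.mulVec w)) =
      star (Complex.exp (Complex.I * (θ : ℂ)) * (A.mulVec w ⬝ᵥ star w)) := by
    rw [star_mul', ← star_dotProduct_star, star_star]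
    congr 1
    simp [← Complex.exp_conj]
  rw [hw, hz, key]
  calc c / K * (∑ i, ‖A.mulVec w i‖ ^ 2) ≤ c / K * (K * ∑ i, ‖w i‖ ^ 2) := by
        gcongr; exact hb w
    _ = c * ∑ i, ‖w i‖ ^ 2 := by field_simp
    _ ≤ _ := h w

theorem stmt19 {D : Type*} [MeasurableSpace D] (μ : Measure D) {d : ℕ} (hd : 1 ≤ d)
    (ζ : D → Matrix (Fin d) (Fin d) ℂ)
    (ζp : ℝ) (hζp : 0 < ζp)
    (hbdd : ∀ᵐ x ∂μ, ∀ z : Fin d → ℂ, eunorm ((ζ x).mulVec z) ≤ ζp * eunorm z)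
    (θ₀ c₀ : ℝ) (hc₀ : 0 < c₀)
    (hell : ∀ᵐ x ∂μ, ∀ z : Fin d → ℂ,
      c₀ * (∑ i, ‖z i‖ ^ 2) ≤
        (Complex.exp (Complex.I * (θ₀ : ℂ)) * ((ζ x).mulVec z ⬝ᵥ star z)).re) :
    (∀ᵐ x ∂μ, IsUnit (ζ x)) ∧
    {θ : ℝ | ∃ c : ℝ, 0 < c ∧ ∀ᵐ x ∂μ, ∀ z : Fin d → ℂ,
        c * (∑ i, ‖z i‖ ^ 2) ≤
          (Complex.exp (Complex.I * (θ : ℂ)) * ((ζ x)⁻¹.mulVec z ⬝ᵥ star z)).re}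
      = (fun t : ℝ => -t) ''
        {θ : ℝ | ∃ c : ℝ, 0 < c ∧ ∀ᵐ x ∂μ, ∀ z : Fin d → ℂ,
          c * (∑ i, ‖z i‖ ^ 2) ≤
            (Complex.exp (Complex.I * (θ : ℂ)) * ((ζ x).mulVec z ⬝ᵥ star z)).re} := by
  have hunit : ∀ᵐ x ∂μ, IsUnit (ζ x) := by
    filter_upwards [hell] with x hx
    rw [← mulVec_injective_iff_isUnit]
    refine (injective_iff_map_eq_zero (ζ x).mulVecLin).2 fun z hz => ?_
    have h1 := sq_mul_sum_le_of_coercive hc₀ (hx z)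
    rw [mulVecLin_apply] at hz
    simp only [hz, Pi.zero_apply, norm_zero, ne_eq, OfNat.ofNat_ne_zero, not_false_eq_true,
      zero_pow, Finset.sum_const_zero] at h1
    have h2 : ∑ i, ‖z i‖ ^ 2 = 0 :=
      le_antisymm (nonpos_of_mul_nonpos_right h1 (by positivity)) (by positivity)
    rw [Finset.sum_eq_zero_iff_of_nonneg fun i _ => by positivity] at h2
    ext i
    simpa using h2 i (Finset.mem_univ i)
  refine ⟨hunit, Set.Subset.antisymm ?_ ?_⟩
  · rintro θ ⟨c, hc, h⟩
    refine ⟨-θ, ⟨c / (1 / c₀ ^ 2), by positivity, ?_⟩, neg_neg θ⟩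
    filter_upwards [hell, hunit, h] with x hx hu hi
    have hdet := (isUnit_iff_isUnit_det _).1 hu
    refine coercive_of_mul_eq_one (nonsing_inv_mul _ hdet) hc (by positivity) (fun w => ?_) hi
    have h1 := sq_mul_sum_le_of_coercive hc₀ (hx ((ζ x)⁻¹.mulVec w))
    rw [mulVec_mulVec, mul_nonsing_inv _ hdet, one_mulVec] at h1
    rw [one_div, ← div_eq_inv_mul, le_div_iff₀' (by positivity)]
    exact h1
  · rintro _ ⟨θ, ⟨c, hc, h⟩, rfl⟩
    refine ⟨c / ζp ^ 2, by positivity, ?_⟩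
    filter_upwards [hbdd, hunit, h] with x hx hu hi
    have hdet := (isUnit_iff_isUnit_det _).1 hu
    refine coercive_of_mul_eq_one (mul_nonsing_inv _ hdet) hc (by positivity) (fun w => ?_) hi
    have h1 := pow_le_pow_left₀ (Real.sqrt_nonneg _) (hx w) 2
    simp only [eunorm] at h1
    rwa [mul_pow, Real.sq_sqrt (by positivity), Real.sq_sqrt (by positivity)] at h1
end
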